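/- Let n ≥ 1, k ≥ 0, and let D^{(k+1)} ∈ ℝ^{(n−k−1)×n} be the (k+1)-th order difference matrix, whose entries are D^{(k+1)}_{ij} = (−1)^{k+1+j−i}·binom(k+1, j−i) if 0 ≤ j − i ≤ k+1 and 0 otherwise. Then the largest eigenvalue of (D^{(k+1)})ᵀD^{(k+1)} satisfies λ_max((D^{(k+1)})ᵀD^{(k+1)}) ≤ 4^{k+1}. -/

import Mathlib

/-!
Multiplication by a matrix whose columns all have absolute sum at most `C` expands the `ℓ¹` norm by
at most a factor `C`. The nonzero entries of a row or of a column of the difference matrix `D` are,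
in absolute value, entries at distinct positions of row `k + 1` of Pascal's triangle, so both `D` and `Dᵀ`
satisfy this with `C = 2 ^ (k + 1)`. Comparing the `ℓ¹` norms of the two sides of `Dᵀ D v = μ v` for
an eigenvector `v` gives `|μ| ≤ 2 ^ (k + 1) * 2 ^ (k + 1) = 4 ^ (k + 1)`. This is a Gershgorin-type
bound for `Dᵀ D`, obtained one factor at a time.
-/

open scoped Matrix

theorem sum_abs_mulVec_le {m n : Type*} [Fintype m] [Fintype n] (A : Matrix m n ℝ) (C : ℝ)
    (hA : ∀ j, ∑ i, |A i j| ≤ C) (v : n → ℝ) :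
    ∑ i, |(A *ᵥ v) i| ≤ C * ∑ j, |v j| := by
  calc ∑ i, |(A *ᵥ v) i| ≤ ∑ i, ∑ j, |A i j| * |v j| := by
        refine Finset.sum_le_sum fun i _ => ?_
        simp only [Matrix.mulVec, dotProduct, ← abs_mul]
        exact Finset.abs_sum_le_sum_abs _ _
    _ = ∑ j, (∑ i, |A i j|) * |v j| := by
        rw [Finset.sum_comm]
        simp only [Finset.sum_mul]
    _ ≤ C * ∑ j, |v j| := by
        rw [Finset.mul_sum]
        exact Finset.sum_le_sum fun j _ => mul_le_mul_of_nonneg_right (hA j) (abs_nonneg _)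

/-- Binomial coefficients `binom(K, g i)` at distinct positions `g i` sum to at most `2 ^ K`; the
positions only have to be distinct and in range where `p` holds. -/
theorem sum_ite_choose_le {ι : Type*} [Fintype ι] (K : ℕ) (p : ι → Prop) [DecidablePred p]
    (g : ι → ℕ) (hg : ∀ i, p i → g i ≤ K) (hinj : ∀ i j, p i → p j → g i = g j → i = j) :
    ∑ i, (if p i then (K.choose (g i) : ℝ) else 0) ≤ 2 ^ K := by
  have hsum : ∑ i with p i, K.choose (g i) ≤ 2 ^ K := by
    rw [← Finset.sum_image (s := Finset.univ.filter p) (g := g) (f := fun m => K.choose m)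
      (fun i hi j hj h => hinj i j (by simpa using hi) (by simpa using hj) h),
      ← Nat.sum_range_choose]
    refine Finset.sum_le_sum_of_subset fun m hm => ?_
    obtain ⟨i, hi, rfl⟩ := Finset.mem_image.1 hm
    exact Finset.mem_range.2 (Nat.lt_succ_of_le (hg i (by simpa using hi)))
  rw [← Finset.sum_filter]
  exact_mod_cast hsum

/-- Let `D^{(k+1)} ∈ ℝ^{(n−k−1)×n}` be the `(k+1)`-th order difference matrix, whose
entries (0-based, with `r := n − k − 1` rows and `n = r + k + 1` columns) are
`D^{(k+1)}_{ij} = (−1)^{k+1+j−i}·binom(k+1, j−i)` if `0 ≤ j − i ≤ k+1` and `0`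
otherwise. Then `λ_max((D^{(k+1)})ᵀD^{(k+1)}) ≤ 4^{k+1}`.
Here `μ = λ_max(DᵀD)` is encoded as an eigenvalue of `DᵀD` dominating all (real)
eigenvalues. -/
theorem statement13 (k r : ℕ)
    (D : Matrix (Fin r) (Fin (r + k + 1)) ℝ)
    (hD : ∀ (i : Fin r) (j : Fin (r + k + 1)),
      D i j = if (i : ℕ) ≤ (j : ℕ) ∧ (j : ℕ) ≤ (i : ℕ) + (k + 1) then
          (-1 : ℝ) ^ (k + 1 + (j : ℕ) - (i : ℕ)) * ((k + 1).choose ((j : ℕ) - (i : ℕ)))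
        else 0)
    (μ : ℝ)
    (hμ : Module.End.HasEigenvalue (Matrix.toEuclideanLin (Dᵀ * D)) μ)
    (hμmax : ∀ c : ℝ, Module.End.HasEigenvalue (Matrix.toEuclideanLin (Dᵀ * D)) c → c ≤ μ) :
    μ ≤ 4 ^ (k + 1) := by
  have habs : ∀ i j, |D i j| = if (i : ℕ) ≤ (j : ℕ) ∧ (j : ℕ) ≤ (i : ℕ) + (k + 1) then
      (((k + 1).choose ((j : ℕ) - (i : ℕ)) : ℕ) : ℝ) else 0 := by
    intro i j
    rw [hD]
    split_ifs <;> simp [abs_mul]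
  have hrow : ∀ i, ∑ j, |Dᵀ j i| ≤ 2 ^ (k + 1) := by
    intro i
    simp only [Matrix.transpose_apply, habs]
    refine sum_ite_choose_le (k + 1) _ (fun j : Fin (r + k + 1) => (j : ℕ) - (i : ℕ)) ?_ ?_
    · intro j hj
      omega
    · intro j l hj hl h
      omega
  have hcol : ∀ j, ∑ i, |D i j| ≤ 2 ^ (k + 1) := by
    intro j
    simp only [habs]
    refine sum_ite_choose_le (k + 1) _ (fun i : Fin r => (j : ℕ) - (i : ℕ)) ?_ ?_
    · intro i hi
      omega
    · intro i l hi hl h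
      omega
  obtain ⟨v, hv⟩ := hμ.exists_hasEigenvector
  have heq : ∀ j, (Dᵀ *ᵥ (D *ᵥ v.ofLp)) j = μ * v j := by
    intro j
    have h := congrArg (fun w => w j) hv.apply_eq_smul
    simpa [Matrix.toLpLin_apply, Matrix.mulVec_mulVec] using h
  have hpos : 0 < ∑ j, |v j| := by
    have hne : ∃ j, v j ≠ 0 := by
      by_contra! h
      exact hv.2 (by ext j; simpa using h j)
    obtain ⟨j, hj⟩ := hne
    exact Finset.sum_pos' (fun _ _ => abs_nonneg _) ⟨j, Finset.mem_univ j, abs_pos.2 hj⟩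
  have h1 := sum_abs_mulVec_le Dᵀ _ hrow (D *ᵥ v.ofLp)
  have h2 := sum_abs_mulVec_le D _ hcol v.ofLp
  simp only [heq, abs_mul, ← Finset.mul_sum] at h1
  have h4 : (4 : ℝ) ^ (k + 1) = 2 ^ (k + 1) * 2 ^ (k + 1) := by
    rw [← mul_pow]
    norm_num
  have h3 : |μ| * ∑ j, |v j| ≤ 4 ^ (k + 1) * ∑ j, |v j| := by
    rw [h4, mul_assoc]
    exact h1.trans (mul_le_mul_of_nonneg_left h2 (by positivity))
  exact (le_abs_self μ).trans (le_of_mul_le_mul_right h3 hpos)
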